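/- Let φ ∈ 𝒜 and let Γ_0 ≥ 0. Assume that for every bounded interval (a,b) ⊆ ℝ and every family (u_δ)_{δ>0} of measurable functions u_δ : (a,b) → ℝ one has liminf_{δ→0⁺} Λ_{δ,1}(φ,u_δ,(a,b)) ≥ 2 · Γ_0 · liminf_{δ→0⁺} osc(u_δ,(a,b)), where osc(u_δ,(a,b)) is the essential oscillation (essential supremum minus essential infimum) of u_δ on (a,b). Then for every integrable right-continuous u : ℝ → ℝ and every family (u_δ)_{δ>0} of measurable functions with u_δ → u in L¹(ℝ) as δ → 0⁺, one has liminf_{δ→0⁺} Λ_{δ,1}(φ,u_δ,ℝ) ≥ 2 · Γ_0 · TV(u). -/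

import Mathlib

/-!
Fix a partition `x₀ ≤ … ≤ x_N` and `η > 0`. By right continuity there is `t > 0` such that `u` is
`η`-close to `u (x i)` on every `[x i, x i + 2t)`. The shifted intervals `(x i + t, x (i+1) + t)`
are pairwise disjoint, and each one contains a set of positive measure to the right of `x i` and
another one to the right of `x (i+1)`, so its essential oscillation sees the increment
`|u (x (i+1)) - u (x i)|` up to `2η`: no choice of Lebesgue points is needed.

Averaging the triangle inequality over the product of these two sets turns this into a bound for
the approximating functions, with an error `2 ‖U δ - u‖₁ / t` that vanishes as `δ → 0`
(`edist_le_essOsc_add`). The local hypothesis applies on each interval. Summing uses that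
`Lambda1` is superadditive over disjoint sets, because interactions between different sets are
nonnegative (`Lambda1_sum_le`), and that `liminf` is superadditive (`sum_liminf_le`). Finally
`η → 0`, and one takes the supremum over partitions.
-/

open MeasureTheory Filter Set Topology ENNReal

/-- The functional `Λ_{δ,p}(φ,u,Ω)` in dimension one. -/
noncomputable def Lambda1 (φ : ℝ → ℝ) (p δ : ℝ) (u : ℝ → ℝ) (Ω : Set ℝ) : ℝ≥0∞ :=
  ∫⁻ x in Ω, ∫⁻ y in Ω, ENNReal.ofReal (φ (|u y - u x| / δ) * δ ^ p / |y - x| ^ (1 + p))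

/-- The interaction law `φ_k`. -/
noncomputable def phik (k t : ℝ) : ℝ := if t ≤ k then 0 else 1

/-- The class `𝒜` of admissible interaction laws. -/
structure IsAdmissible (φ : ℝ → ℝ) : Prop where
  nonneg : ∀ t, 0 ≤ t → 0 ≤ φ t
  nontrivial : ∃ t, 0 ≤ t ∧ φ t ≠ 0
  mono : MonotoneOn φ (Set.Ici 0)
  lsc : LowerSemicontinuousOn φ (Set.Ici 0)
  cont : ∃ S : Finset ℝ, (∀ s ∈ S, 0 < s) ∧
    ∀ t ∈ Set.Ici (0 : ℝ), t ∉ S → ContinuousWithinAt φ (Set.Ici 0) t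
  quad : ∃ a : ℝ, ∀ t ∈ Set.Icc (0 : ℝ) 1, φ t ≤ a * t ^ 2
  bdd : ∃ b : ℝ, ∀ t, 0 ≤ t → φ t ≤ b

/-- The essential oscillation of `u` on `(a,b)`, i.e. the essential supremum of
`|u y - u x|` over `(x,y) ∈ (a,b)²` (equal to `essSup u - essInf u`). -/
noncomputable def essOsc (u : ℝ → ℝ) (a b : ℝ) : ℝ≥0∞ :=
  essSup (fun q : ℝ × ℝ => edist (u q.1) (u q.2))
    ((volume.restrict (Set.Ioo a b)).prod (volume.restrict (Set.Ioo a b)))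

/-- Superadditivity of `Lambda1`: dropping the interactions between different sets, and those with
the complement, only decreases the functional. -/
theorem Lambda1_sum_le (φ : ℝ → ℝ) (p δ : ℝ) (v : ℝ → ℝ) {ι : Type*} (s : Finset ι)
    (I : ι → Set ℝ) (hI : ∀ i ∈ s, MeasurableSet (I i))
    (hd : Set.PairwiseDisjoint (↑s) I) :
    ∑ i ∈ s, Lambda1 φ p δ v (I i) ≤ Lambda1 φ p δ v Set.univ := by
  unfold Lambda1
  calc _ ≤ ∑ i ∈ s, ∫⁻ x in I i, ∫⁻ y in Set.univ,
        ENNReal.ofReal (φ (|v y - v x| / δ) * δ ^ p / |y - x| ^ (1 + p)) :=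
        Finset.sum_le_sum fun i _ => lintegral_mono fun x => lintegral_mono_set (subset_univ _)
    _ = ∫⁻ x in ⋃ i ∈ s, I i, ∫⁻ y in Set.univ,
        ENNReal.ofReal (φ (|v y - v x| / δ) * δ ^ p / |y - x| ^ (1 + p)) :=
        (lintegral_biUnion_finset hd hI _).symm
    _ ≤ _ := lintegral_mono_set (subset_univ _)

/-- Fatou's lemma for the counting measure on a finite index set. -/
theorem sum_liminf_le {α ι : Type*} (F : Filter α) [F.IsCountablyGenerated] (s : Finset ι)
    (f : ι → α → ℝ≥0∞) :
    ∑ i ∈ s, liminf (f i) F ≤ liminf (fun a => ∑ i ∈ s, f i a) F := by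
  let _ : MeasurableSpace s := ⊤
  have h := lintegral_liminf_le' (μ := (Measure.count : Measure s)) (u := F)
    (f := fun a (i : s) => f i a) (fun a => (measurable_from_top).aemeasurable)
  simp only [lintegral_fintype, Measure.count_singleton, mul_one] at h
  have e (g : ι → ℝ≥0∞) : ∑ i : s, g i = ∑ i ∈ s, g i := Finset.sum_coe_sort s g
  rw [e (fun i => liminf (f i) F)] at h
  exact h.trans_eq (congrArg (fun w => liminf w F) (funext fun a => e (fun i => f i a)))

/-- The increment of `u` between `x` and `y` is controlled by the essential oscillation of an
`L¹`-approximation `v` on the shifted interval `(x + t, y + t)`. The inequality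
`|u y - u x| ≤ 2η + |v q₁ - v q₂| + |v q₁ - u q₁| + |v q₂ - u q₂|` is averaged over
`q ∈ (x + t, x + 2t) × (y, y + t)`, a subset of the square of that interval. -/
theorem edist_le_essOsc_add (u v : ℝ → ℝ) (hu : AEStronglyMeasurable u) (hv : Measurable v)
    {x y t : ℝ} (ht : 0 < t) (hxy : x + t ≤ y) {η : ℝ≥0∞}
    (hx : ∀ z ∈ Set.Ico x (x + 2 * t), edist (u z) (u x) ≤ η)
    (hy : ∀ z ∈ Set.Ico y (y + 2 * t), edist (u z) (u y) ≤ η) :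
    edist (u y) (u x) ≤ (2 * η + essOsc v (x + t) (y + t)) +
      2 * (eLpNorm (fun z => v z - u z) 1 volume / ENNReal.ofReal t) := by
  set A := Set.Ioo (x + t) (x + 2 * t)
  set B := Set.Ioo y (y + t)
  set I := Set.Ioo (x + t) (y + t)
  set T := ENNReal.ofReal t with hT
  have hT0 : T ≠ 0 := by simp [hT, ht]
  have hTt : T ≠ ⊤ := ENNReal.ofReal_ne_top
  set g : ℝ → ℝ≥0∞ := fun z => ‖v z - u z‖ₑ with hg
  have hgm : AEMeasurable g volume := (hv.aestronglyMeasurable.sub hu).enorm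
  set N := eLpNorm (fun z => v z - u z) 1 volume with hN
  have hNg : N = ∫⁻ z, g z := eLpNorm_one_eq_lintegral_enorm
  set E := essOsc v (x + t) (y + t) with hE
  have hA : A ⊆ I := Set.Ioo_subset_Ioo le_rfl (by linarith)
  have hB : B ⊆ I := Set.Ioo_subset_Ioo (by linarith) le_rfl
  set μ := (volume.restrict A).prod (volume.restrict B) with hμ
  have hvA : volume A = T := by rw [Real.volume_Ioo]; congr 1; ring
  have hvB : volume B = T := by rw [Real.volume_Ioo]; congr 1; ring
  have h1 : ∀ᵐ q ∂μ, edist (v q.1) (v q.2) ≤ E := by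
    have : ∀ᵐ q ∂((volume.restrict I).prod (volume.restrict I)),
      edist (v q.1) (v q.2) ≤ E := ENNReal.ae_le_essSup _
    exact ((Measure.restrict_mono hA le_rfl).absolutelyContinuous.prod
      (Measure.restrict_mono hB le_rfl).absolutelyContinuous).ae_le this
  have h2 : ∀ᵐ q ∂μ, q ∈ A ×ˢ B := by
    rw [hμ, Measure.prod_restrict]
    exact ae_restrict_mem (measurableSet_Ioo.prod measurableSet_Ioo)
  have h3 : ∀ᵐ q ∂μ, edist (u y) (u x) ≤ (2 * η + E) + (g q.1 + g q.2) := by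
    filter_upwards [h1, h2] with q hq1 hq2
    have hqA : edist (u q.1) (u x) ≤ η :=
      hx _ ⟨by linarith [hq2.1.1], hq2.1.2⟩
    have hqB : edist (u y) (u q.2) ≤ η := by
      rw [edist_comm]; exact hy _ ⟨hq2.2.1.le, by linarith [hq2.2.2]⟩
    have e1 : edist (v q.1) (u q.1) = g q.1 := edist_eq_enorm_sub _ _
    have e2 : edist (v q.2) (u q.2) = g q.2 := edist_eq_enorm_sub _ _
    calc edist (u y) (u x)
        ≤ edist (u y) (u q.2) + edist (u q.2) (v q.2) + edist (v q.2) (v q.1)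
          + edist (v q.1) (u q.1) + edist (u q.1) (u x) := by
          refine (edist_triangle _ (u q.1) _).trans (add_le_add_left ?_ _)
          refine (edist_triangle _ (v q.1) _).trans (add_le_add_left ?_ _)
          exact edist_triangle4 _ _ _ _
      _ ≤ η + g q.2 + E + g q.1 + η := by
          rw [edist_comm (u q.2), edist_comm (v q.2) (v q.1), e1, e2]
          gcongr
      _ = _ := by ring
  have h4 := lintegral_mono_ae h3
  have hμu : μ Set.univ = T * T := by
    rw [hμ, ← Set.univ_prod_univ, Measure.prod_prod]; simp [hvA, hvB]
  have hgA : AEMeasurable g (volume.restrict A) := hgm.restrict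
  have hgB : AEMeasurable g (volume.restrict B) := hgm.restrict
  have i1 : ∫⁻ q, g q.1 ∂μ ≤ N * T := by
    have := lintegral_prod_mul (μ := volume.restrict A) (ν := volume.restrict B)
      (f := g) (g := fun _ => 1) hgA aemeasurable_const
    simp only [mul_one, lintegral_const, one_mul, Measure.restrict_apply_univ, hvB] at this
    rw [hμ, this, hNg]
    gcongr
    exact Measure.restrict_le_self
  have i2 : ∫⁻ q, g q.2 ∂μ ≤ N * T := by
    have := lintegral_prod_mul (μ := volume.restrict A) (ν := volume.restrict B)
      (f := fun _ => 1) (g := g) aemeasurable_const hgB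
    simp only [lintegral_const, one_mul, Measure.restrict_apply_univ, hvA] at this
    rw [hμ, this, hNg, mul_comm]
    gcongr
    exact Measure.restrict_le_self
  have hg1 : AEMeasurable (fun q : ℝ × ℝ => g q.1) μ := hgA.comp_fst
  rw [lintegral_const, hμu, lintegral_add_left measurable_const, lintegral_const, hμu,
    lintegral_add_left' hg1] at h4
  have hTT : N / T * (T * T) = N * T := by
    rw [← mul_assoc, ENNReal.div_mul_cancel hT0 hTt]
  refine (ENNReal.mul_le_mul_iff_left (mul_ne_zero hT0 hT0)
    (ENNReal.mul_ne_top hTt hTt)).1 ?_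
  calc _ ≤ _ := h4
    _ ≤ (2 * η + E) * (T * T) + (N * T + N * T) := by gcongr
    _ = _ := by rw [← hTT]; ring

/-- localization technique. If a local lower bound via the essential
oscillation holds on every bounded interval, then the global Gamma-liminf lower bound
`2·Γ₀·TV(u)` holds. -/
theorem localization (φ : ℝ → ℝ) (hφ : IsAdmissible φ) (Γ₀ : ℝ) (hΓ : 0 ≤ Γ₀)
    (hyp : ∀ a b : ℝ, a < b → ∀ U : ℝ → ℝ → ℝ, (∀ δ > (0 : ℝ), Measurable (U δ)) →
      ENNReal.ofReal (2 * Γ₀) * Filter.liminf (fun δ : ℝ => essOsc (U δ) a b) (𝓝[>] 0) ≤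
        Filter.liminf (fun δ : ℝ => Lambda1 φ 1 δ (U δ) (Set.Ioo a b)) (𝓝[>] 0))
    (u : ℝ → ℝ) (hu : Integrable u) (hrc : ∀ x : ℝ, ContinuousWithinAt u (Set.Ici x) x)
    (U : ℝ → ℝ → ℝ) (hmeas : ∀ δ > (0 : ℝ), Measurable (U δ))
    (hconv : Tendsto (fun δ : ℝ => eLpNorm (fun x => U δ x - u x) 1 volume) (𝓝[>] 0) (𝓝 0)) :
    ENNReal.ofReal (2 * Γ₀) * eVariationOn u Set.univ ≤
      Filter.liminf (fun δ : ℝ => Lambda1 φ 1 δ (U δ) Set.univ) (𝓝[>] 0) := by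
  set C := ENNReal.ofReal (2 * Γ₀) with hC
  set L := Filter.liminf (fun δ : ℝ => Lambda1 φ 1 δ (U δ) Set.univ) (𝓝[>] 0) with hL
  rw [eVariationOn, ENNReal.mul_iSup]
  refine iSup_le ?_
  rintro ⟨n, f, hf, -⟩
  dsimp only
  set D : ℕ → ℝ≥0∞ := fun i => edist (u (f (i + 1))) (u (f i)) with hD
  have key : ∀ η : ℝ≥0∞, 0 < η → C * ∑ i ∈ Finset.range n, D i ≤ L + C * (n * (3 * η)) := by
    intro η hη
    have hclose : ∀ i, ∀ᶠ t in 𝓝[>] (0 : ℝ),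
        ∀ z ∈ Set.Ico (f i) (f i + 2 * t), edist (u z) (u (f i)) ≤ η := by
      intro i
      have h := (hrc (f i)).eventually (Metric.closedEBall_mem_nhds (u (f i)) hη)
      obtain ⟨c, hc, hcs⟩ := mem_nhdsGE_iff_exists_Ico_subset.1 h
      have hpos : 0 < (c - f i) / 2 := by have := Set.mem_Ioi.1 hc; linarith
      filter_upwards [Ioo_mem_nhdsGT hpos] with t ht z hz
      exact hcs ⟨hz.1, by linarith [hz.2, ht.2]⟩
    have hgap : ∀ i, ∀ᶠ t in 𝓝[>] (0 : ℝ), f i < f (i + 1) → f i + t ≤ f (i + 1) := by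
      intro i
      by_cases h : f i < f (i + 1)
      · filter_upwards [Ioo_mem_nhdsGT (sub_pos.2 h)] with t ht _
        linarith [ht.2]
      · exact Eventually.of_forall fun t h' => absurd h' h
    have hall : ∀ᶠ t in 𝓝[>] (0 : ℝ), 0 < t ∧
        (∀ i ∈ Finset.range (n + 1), ∀ z ∈ Set.Ico (f i) (f i + 2 * t),
          edist (u z) (u (f i)) ≤ η) ∧
        (∀ i ∈ Finset.range n, f i < f (i + 1) → f i + t ≤ f (i + 1)) :=
      (eventually_mem_nhdsWithin.mono fun t ht => ht).and
        (((Finset.eventually_all _).2 fun i _ => hclose i).and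
          ((Finset.eventually_all _).2 fun i _ => hgap i))
    obtain ⟨t, ht, hcl, hgp⟩ := hall.exists
    have hN : ∀ᶠ δ in 𝓝[>] (0 : ℝ),
        2 * (eLpNorm (fun x => U δ x - u x) 1 volume / ENNReal.ofReal t) ≤ η := by
      have : Tendsto (fun δ : ℝ =>
          2 * (eLpNorm (fun x => U δ x - u x) 1 volume / ENNReal.ofReal t)) (𝓝[>] 0)
          (𝓝 (2 * (0 / ENNReal.ofReal t))) :=
        ENNReal.Tendsto.const_mul
          (ENNReal.Tendsto.div_const hconv (Or.inr (by simpa using ht))) (Or.inr (by simp))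
      rw [ENNReal.zero_div, mul_zero] at this
      exact (this.eventually (Iio_mem_nhds hη)).mono fun δ h => le_of_lt h
    have hterm : ∀ i ∈ Finset.range n, C * D i ≤
        liminf (fun δ : ℝ => Lambda1 φ 1 δ (U δ) (Set.Ioo (f i + t) (f (i + 1) + t))) (𝓝[>] 0)
          + C * (3 * η) := by
      intro i hi
      have hi' := Finset.mem_range.1 hi
      -- A partition may repeat points; the interval is then empty and the increment zero.
      rcases (hf (Nat.le_succ i)).eq_or_lt with heq | hlt
      · have : D i = 0 := by simp only [hD]; rw [← Nat.succ_eq_add_one, ← heq, edist_self]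
        simp [this]
      · have hO : D i ≤ liminf (fun δ : ℝ => essOsc (U δ) (f i + t) (f (i + 1) + t)) (𝓝[>] 0)
            + 3 * η := by
          rw [← tsub_le_iff_right]
          refine le_liminf_of_le (by isBoundedDefault) ?_
          filter_upwards [hN, self_mem_nhdsWithin] with δ hδ hδ0
          rw [tsub_le_iff_right]
          refine (edist_le_essOsc_add u (U δ) hu.aestronglyMeasurable (hmeas δ hδ0) ht
            (hgp i hi hlt) (hcl i (Finset.mem_range.2 (by omega)))
            (hcl (i + 1) (Finset.mem_range.2 (by omega)))).trans ?_
          calc _ ≤ 2 * η + essOsc (U δ) (f i + t) (f (i + 1) + t) + η := by gcongr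
            _ = _ := by ring
        calc C * D i ≤ _ := mul_le_mul_right hO C
          _ ≤ _ := by
            rw [mul_add]
            gcongr
            exact hyp _ _ (by simpa using hlt) U hmeas
    have hdisj : Set.PairwiseDisjoint (↑(Finset.range n))
        (fun i => Set.Ioo (f i + t) (f (i + 1) + t)) := by
      have hm : Monotone fun i => f i + t := fun i j h => by simpa using hf h
      exact fun i _ j _ hij => hm.pairwise_disjoint_on_Ioo_succ hij
    calc C * ∑ i ∈ Finset.range n, D i = ∑ i ∈ Finset.range n, C * D i := Finset.mul_sum _ _ _
      _ ≤ _ := Finset.sum_le_sum hterm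
      _ ≤ L + C * (n * (3 * η)) := by
        rw [Finset.sum_add_distrib, Finset.sum_const, Finset.card_range, nsmul_eq_mul]
        refine add_le_add ?_ (le_of_eq (by ring))
        refine (sum_liminf_le _ _ _).trans (liminf_le_liminf (Eventually.of_forall fun δ => ?_))
        exact Lambda1_sum_le φ 1 δ (U δ) _ _ (fun _ _ => measurableSet_Ioo) hdisj
  have hlim : Tendsto (fun η : ℝ≥0∞ => L + C * (n * (3 * η))) (𝓝[>] 0)
      (𝓝 (L + C * (n * (3 * 0)))) := by
    refine Tendsto.mono_left ?_ nhdsWithin_le_nhds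
    refine tendsto_const_nhds.add ?_
    refine ENNReal.Tendsto.const_mul (ENNReal.Tendsto.const_mul
      (ENNReal.Tendsto.const_mul tendsto_id (Or.inr (by simp)))
      (Or.inr (by simp))) (Or.inr ENNReal.ofReal_ne_top)
  have := ge_of_tendsto hlim (eventually_mem_nhdsWithin.mono fun η hη => key η hη)
  simpa using this
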